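/- With the standard square decomposition I² = D₁ ∪ D₂ ∪ K (as in the main construction), let x, y ∈ K \ {a,b} with x ≠ y, and let φₓ : [0,1] → I² be a crosscut through x (bottom edge to top edge, passing through x at parameter 1/2, with φₓ([0,1/2)) ⊆ D₁ and φₓ((1/2,1]) ⊆ D₂). Then there exists a crosscut φ_y through y with the same properties such that φₓ([0,1]) ∩ φ_y([0,1]) = ∅. -/

import Mathlib

/-- The unit square `I² = [0,1] × [0,1]` in the plane. -/
def unitSq : Set (ℝ × ℝ) := Set.Icc (0, 0) (1, 1)

/-- The open bottom edge `(0,1) × {0}` of the unit square. -/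
def botEdge : Set (ℝ × ℝ) := {p | p.1 ∈ Set.Ioo (0 : ℝ) 1 ∧ p.2 = 0}

/-- The open top edge `(0,1) × {1}` of the unit square. -/
def topEdge : Set (ℝ × ℝ) := {p | p.1 ∈ Set.Ioo (0 : ℝ) 1 ∧ p.2 = 1}

/-- The open left edge `{0} × (0,1)` of the unit square. -/
def leftEdge : Set (ℝ × ℝ) := {p | p.1 = 0 ∧ p.2 ∈ Set.Ioo (0 : ℝ) 1}

/-- The open right edge `{1} × (0,1)` of the unit square. -/
def rightEdge : Set (ℝ × ℝ) := {p | p.1 = 1 ∧ p.2 ∈ Set.Ioo (0 : ℝ) 1}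

/-- Accessibility of a boundary point from an open set. -/
def Accessible {X : Type*} [TopologicalSpace X] (U : Set X) (x : X) : Prop :=
  ∃ φ : unitInterval → X, Continuous φ ∧ Function.Injective φ ∧
    (∀ t, φ t ∈ closure U) ∧ (∀ t : unitInterval, (t : ℝ) < 1 → φ t ∈ U) ∧ φ 1 = x

/-- The midpoint parameter `1/2` of the unit interval. -/
noncomputable def half : unitInterval := ⟨1/2, by constructor <;> norm_num⟩

/-- A *crosscut* of the square through `x` (relative to the decomposition pieces `D₁`, `D₂`):
a continuous injective path from the open bottom edge to the open top edge, passing through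
`x` at parameter `1/2`, lying in the open square except for its endpoints, with its first
half in `D₁` and its second half in `D₂`. -/
def IsCrosscut (D₁ D₂ : Set (ℝ × ℝ)) (x : ℝ × ℝ) (φ : unitInterval → ℝ × ℝ) : Prop :=
  Continuous φ ∧ Function.Injective φ ∧ φ 0 ∈ botEdge ∧ φ 1 ∈ topEdge ∧ φ half = x ∧
    (∀ t : unitInterval, 0 < (t : ℝ) → (t : ℝ) < 1 → φ t ∈ interior unitSq) ∧
    (∀ t : unitInterval, (t : ℝ) < 1/2 → φ t ∈ D₁) ∧
    (∀ t : unitInterval, 1/2 < (t : ℝ) → φ t ∈ D₂)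

/-- The standard square decomposition `I² = D₁ ∪ D₂ ∪ K`. -/
structure SqDecomp (D₁ D₂ K : Set (ℝ × ℝ)) (a b : ℝ × ℝ) : Prop where
  cover : unitSq = D₁ ∪ D₂ ∪ K
  disj : Disjoint D₁ D₂
  open₁ : ∃ U, IsOpen U ∧ D₁ = U ∩ unitSq
  open₂ : ∃ U, IsOpen U ∧ D₂ = U ∩ unitSq
  pconn₁ : IsPathConnected D₁
  pconn₂ : IsPathConnected D₂
  front₁ : K = closure D₁ \ D₁
  front₂ : K = closure D₂ \ D₂
  acc₁ : ∀ x ∈ K, Accessible D₁ x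
  acc₂ : ∀ x ∈ K, Accessible D₂ x
  bdry : K ∩ frontier unitSq = {a, b}
  ha : a ∈ leftEdge
  hb : b ∈ rightEdge

open Set Filter Topology

/-- An arc in `X` from `y` to `z`, parametrised by `[0,1]`. -/
structure IsArc {X : Type*} [TopologicalSpace X] (δ : ℝ → X) (y z : X) : Prop where
  cont : ContinuousOn δ (Icc 0 1)
  inj : InjOn δ (Icc 0 1)
  source : δ 0 = y
  target : δ 1 = z

/-- A nowhere vanishing continuous function on a simply connected space has a continuous
logarithm. -/
theorem exists_continuous_log {A : Type*} [TopologicalSpace A] [SimplyConnectedSpace A]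
    [LocallyPathConnectedSpace A] (f : C(A, ℂ)) (hf : ∀ a, f a ≠ 0) :
    ∃ k : C(A, ℂ), ∀ a, Complex.exp (k a) = f a := by
  obtain ⟨a₀⟩ : Nonempty A := inferInstance
  obtain ⟨k, ⟨-, hk⟩, -⟩ := Complex.isCoveringMapOn_exp.existsUnique_continuousMap_lifts f
    (a₀ := a₀) (e₀ := Complex.log (f a₀)) (Complex.exp_log (hf a₀)) hf
  exact ⟨k, fun a => congrFun hk a⟩

/-- A map of the plane agreeing with a translation outside a disc has a zero. -/
theorem exists_eq_zero_of_eq_sub {h : ℂ → ℂ} (hc : Continuous h) {p : ℂ} {r : ℝ} (hr : 0 < r)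
    (hh : ∀ z, dist z p = r → h z = z - p) : ∃ z, h z = 0 := by
  by_contra! hne
  obtain ⟨k, hk⟩ := exists_continuous_log ⟨h, hc⟩ hne
  simp only [ContinuousMap.coe_mk] at hk
  have hk' : ∀ θ : ℝ, Complex.exp (k (circleMap p r θ) - θ * Complex.I) = r := fun θ => by
    have h1 : circleMap p r θ - p = r * Complex.exp (θ * Complex.I) := by simp [circleMap]
    rw [Complex.exp_sub, hk, hh _ (by simp [circleMap, abs_of_pos hr, dist_eq_norm]), h1,
      mul_div_cancel_right₀ _ (Complex.exp_ne_zero _)]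
  have hcont : Continuous fun θ : ℝ => k (circleMap p r θ) - θ * Complex.I := by
    have := continuous_circleMap p r
    fun_prop
  have hconst := Complex.isCoveringMap_exp.const_of_comp hcont
    (fun a b => Subtype.ext (by simp only [hk']))
    0 (2 * Real.pi)
  simp only [circleMap, Complex.ofReal_zero, zero_mul, Complex.exp_zero, mul_one, sub_zero,
    Complex.ofReal_mul, Complex.ofReal_ofNat, Complex.exp_two_pi_mul_I] at hconst
  exact Complex.two_pi_I_ne_zero (by linear_combination hconst)

/-- The function `(z - p) / (z - q)` has a continuous logarithm on `X`. -/
def HasLogRatio (X : Set ℂ) (p q : ℂ) : Prop :=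
  ∃ g : ℂ → ℂ, ContinuousOn g X ∧ ∀ z ∈ X, z - p = (z - q) * Complex.exp (g z)

theorem HasLogRatio.symm {X : Set ℂ} {p q : ℂ} (h : HasLogRatio X p q) : HasLogRatio X q p := by
  obtain ⟨g, hg, h⟩ := h
  refine ⟨fun z => - g z, hg.neg, fun z hz => ?_⟩
  rw [h z hz, Complex.exp_neg, mul_assoc, mul_inv_cancel₀ (Complex.exp_ne_zero _), mul_one]

theorem HasLogRatio.trans {X : Set ℂ} {p q r : ℂ} (h : HasLogRatio X p q)
    (h' : HasLogRatio X q r) : HasLogRatio X p r := by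
  obtain ⟨g, hg, h⟩ := h
  obtain ⟨g', hg', h'⟩ := h'
  refine ⟨fun z => g' z + g z, hg'.add hg, fun z hz => ?_⟩
  rw [h z hz, h' z hz, Complex.exp_add, mul_assoc]

theorem hasLogRatio_of_dist_lt {X : Set ℂ} {p q : ℂ} {ε : ℝ} (hX : ∀ z ∈ X, ε ≤ dist z q)
    (hpq : dist p q < ε) : HasLogRatio X p q := by
  have h0 : ∀ z ∈ X, z - q ≠ 0 := fun z hz h => by
    have := hX z hz
    rw [dist_eq_norm, h, norm_zero] at this
    linarith [dist_nonneg (x := p) (y := q)]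
  have h1 : ∀ z ∈ X, (z - p) / (z - q) ∈ Complex.slitPlane := fun z hz => by
    have h2 : (z - p) / (z - q) = 1 + (q - p) / (z - q) := by
      field_simp [h0 z hz]
      ring
    rw [h2]
    apply Complex.mem_slitPlane_of_norm_lt_one
    rw [norm_div, div_lt_one (norm_pos_iff.2 (h0 z hz)), ← dist_eq_norm, ← dist_eq_norm, dist_comm]
    exact hpq.trans_le (hX z hz)
  refine ⟨fun z => Complex.log ((z - p) / (z - q)), ContinuousOn.clog ?_ h1, fun z hz => ?_⟩
  · exact (by fun_prop : ContinuousOn (fun z => z - p) X).div (by fun_prop) h0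
  · rw [Complex.exp_log (Complex.slitPlane_ne_zero (h1 z hz)), mul_div_cancel₀ _ (h0 z hz)]

theorem hasLogRatio_of_isPreconnected {X S : Set ℂ} (hX : IsClosed X) (hS : IsPreconnected S)
    (hd : Disjoint S X) {p q : ℂ} (hp : p ∈ S) (hq : q ∈ S) : HasLogRatio X p q := by
  refine hS.induction₂ (HasLogRatio X) (fun x hx => ?_) (fun _ _ _ _ _ _ => .trans)
    (fun _ _ _ _ => .symm) hp hq
  obtain ⟨ε, hε, hb⟩ := Metric.isOpen_iff.1 hX.isOpen_compl x (disjoint_left.1 hd hx)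
  filter_upwards [nhdsWithin_le_nhds (Metric.ball_mem_nhds x hε)] with y hy
  refine (hasLogRatio_of_dist_lt (fun z hz => ?_) (Metric.mem_ball.1 hy)).symm
  by_contra! h
  exact hb h hz

theorem IsArc.exists_leftInverse {δ : ℝ → ℂ} {y z : ℂ} (h : IsArc δ y z) :
    ∃ τ : ℂ → ℝ, ContinuousOn τ (δ '' Icc 0 1) ∧ ∀ t ∈ Icc (0 : ℝ) 1, τ (δ t) = t := by
  have hτ : ∀ t ∈ Icc (0 : ℝ) 1, Function.invFunOn δ (Icc 0 1) (δ t) = t :=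
    fun t ht => h.inj.leftInvOn_invFunOn ht
  refine ⟨_, ?_, hτ⟩
  rw [continuousOn_iff_isClosed]
  intro t ht
  refine ⟨δ '' (t ∩ Icc 0 1), ?_, ?_⟩
  · exact ((isCompact_Icc.inter_left ht).image_of_continuousOn
      (h.cont.mono inter_subset_right)).isClosed
  · ext w
    constructor
    · rintro ⟨hw, s, hs, rfl⟩
      rw [mem_preimage, hτ s hs] at hw
      exact ⟨⟨s, ⟨hw, hs⟩, rfl⟩, s, hs, rfl⟩
    · rintro ⟨⟨s, ⟨hs, hs'⟩, rfl⟩, -⟩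
      exact ⟨by rwa [mem_preimage, hτ s hs'], s, hs', rfl⟩

theorem HasLogRatio.union_arc {X : Set ℂ} {p q y z : ℂ} (h : HasLogRatio X p q) (hX : IsClosed X)
    {ψ : ℝ → ℂ} (hψ : IsArc ψ y z) (hXψ : ∀ t ∈ Icc (0 : ℝ) 1, ψ t ∈ X → t = 1)
    (hp : p ∉ ψ '' Icc 0 1) (hq : q ∉ ψ '' Icc 0 1) : HasLogRatio (X ∪ ψ '' Icc 0 1) p q := by
  classical
  obtain ⟨τ, hτ, hτψ⟩ := hψ.exists_leftInverse
  obtain ⟨g, hg, hgX⟩ := h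
  have hp' : ∀ t ∈ Icc (0 : ℝ) 1, ψ t - p ≠ 0 := fun t ht h => hp ⟨t, ht, sub_eq_zero.1 h⟩
  have hq' : ∀ t ∈ Icc (0 : ℝ) 1, ψ t - q ≠ 0 := fun t ht h => hq ⟨t, ht, sub_eq_zero.1 h⟩
  have hc : ContinuousOn (fun t => (ψ t - p) / (ψ t - q)) (Icc 0 1) :=
    (hψ.cont.sub continuousOn_const).div (hψ.cont.sub continuousOn_const) hq'
  let P : ℝ → ℝ := fun t => (projIcc (0 : ℝ) 1 zero_le_one t : ℝ)
  have hPm : ∀ t, P t ∈ Icc (0 : ℝ) 1 := fun t => (projIcc (0 : ℝ) 1 zero_le_one t).2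
  have hPe : ∀ t ∈ Icc (0 : ℝ) 1, P t = t := fun t ht => by
    simp only [P, projIcc_of_mem zero_le_one ht]
  have hPc : Continuous P := continuous_subtype_val.comp continuous_projIcc
  obtain ⟨k, hk⟩ := exists_continuous_log
    ⟨fun t => (ψ (P t) - p) / (ψ (P t) - q), hc.comp_continuous hPc hPm⟩
    fun t => div_ne_zero (hp' _ (hPm t)) (hq' _ (hPm t))
  simp only [ContinuousMap.coe_mk] at hk
  have h1 : (1 : ℝ) ∈ Icc (0 : ℝ) 1 := ⟨zero_le_one, le_rfl⟩
  obtain ⟨c, hc1, hc2⟩ : ∃ c : ℂ, Complex.exp c = 1 ∧ (ψ 1 ∈ X → k 1 + c = g (ψ 1)) := by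
    by_cases hX1 : ψ 1 ∈ X
    · refine ⟨g (ψ 1) - k 1, ?_, fun _ => by ring⟩
      have := hq' 1 h1
      have := hp' 1 h1
      rw [Complex.exp_sub, hk, hPe 1 h1, hgX _ hX1]
      rw [hgX _ hX1] at this
      field_simp
    · exact ⟨0, Complex.exp_zero, fun h => absurd h hX1⟩
  have hA : EqOn (fun z => if z ∈ X then g z else k (τ z) + c) (fun z => k (τ z) + c)
      (ψ '' Icc 0 1) := by
    rintro _ ⟨t, ht, rfl⟩
    by_cases hz : ψ t ∈ X
    · obtain rfl := hXψ t ht hz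
      simp only [if_pos hz, hτψ 1 ht, hc2 hz]
    · simp only [if_neg hz]
  refine ⟨fun z => if z ∈ X then g z else k (τ z) + c, ContinuousOn.union_of_isClosed ?_ ?_ hX
    (isCompact_Icc.image_of_continuousOn hψ.cont).isClosed, ?_⟩
  · exact hg.congr fun z hz => if_pos hz
  · exact ((k.continuous.comp_continuousOn hτ).add continuousOn_const).congr hA
  · rintro z (hz | hz)
    · simp only [if_pos hz, hgX z hz]
    · rw [hA hz]
      obtain ⟨t, ht, rfl⟩ := hz
      simp only [hτψ t ht, Complex.exp_add, hc1, mul_one, hk, hPe t ht]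
      rw [mul_div_cancel₀ _ (hq' t ht)]

theorem not_hasLogRatio_of_frontier_subset {Z R : Set ℂ} {p q : ℂ} (hZ : IsClosed Z)
    (hRb : Bornology.IsBounded R) (hRZ : frontier R ⊆ Z) (hp : p ∈ R)
    (hq : q ∉ closure R) : ¬ HasLogRatio Z p q := by
  classical
  rintro ⟨g, hg, hgZ⟩
  obtain ⟨G, hG⟩ := ContinuousMap.exists_restrict_eq hZ ⟨Z.domRestrict g, hg.domRestrict⟩
  replace hG : ∀ z ∈ Z, G z = g z := fun z hz => congrArg (fun f : C(Z, ℂ) => f ⟨z, hz⟩) hG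
  obtain ⟨r, hr⟩ := hRb.subset_ball p
  have hr0 : 0 < r := Metric.pos_of_mem_ball (hr hp)
  obtain ⟨z, hz⟩ := exists_eq_zero_of_eq_sub (p := p) (r := r)
    (h := fun z => if z ∈ R then (z - q) * Complex.exp (G z) else z - p)
    (Continuous.if (fun a ha => by rw [hgZ a (hRZ ha), hG a (hRZ ha)])
      (by fun_prop) (by fun_prop)) hr0
    (fun z hz => if_neg fun h => (Metric.mem_ball.1 (hr h)).ne hz)
  by_cases hzR : z ∈ R
  · simp only [if_pos hzR, mul_eq_zero, Complex.exp_ne_zero, or_false, sub_eq_zero] at hz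
    exact hq (hz ▸ subset_closure hzR)
  · simp only [if_neg hzR, sub_eq_zero] at hz
    exact hzR (hz ▸ hp)

theorem mem_closure_of_arc_of_isPreconnected {X R S : Set (ℝ × ℝ)} {p q y z : ℝ × ℝ}
    (hX : IsClosed X) {ψ : ℝ → ℝ × ℝ} (hψ : IsArc ψ y z)
    (hXψ : ∀ t ∈ Icc (0 : ℝ) 1, ψ t ∈ X → t = 1)
    (hpψ : p ∉ ψ '' Icc 0 1) (hqψ : q ∉ ψ '' Icc 0 1) (hS : IsPreconnected S) (hd : Disjoint S X)
    (hpS : p ∈ S) (hqS : q ∈ S) (hRb : Bornology.IsBounded R)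
    (hR : frontier R ⊆ X ∪ ψ '' Icc 0 1) (hp : p ∈ R) : q ∈ closure R := by
  by_contra hq
  let e := Complex.equivRealProdCLM.symm
  have hi : ∀ (s : Set (ℝ × ℝ)) w, e w ∈ e '' s ↔ w ∈ s := fun s w => e.injective.mem_set_image
  have himg : (e ∘ ψ) '' Icc 0 1 = e '' (ψ '' Icc 0 1) := image_comp _ _ _
  have hψ' : IsArc (e ∘ ψ) (e y) (e z) :=
    ⟨e.continuous.comp_continuousOn hψ.cont, e.injective.comp_injOn hψ.inj,
      congrArg e hψ.source, congrArg e hψ.target⟩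
  have hX' : IsClosed (e '' X) := e.toHomeomorph.isClosedMap _ hX
  refine not_hasLogRatio_of_frontier_subset (Z := e '' X ∪ (e ∘ ψ) '' Icc 0 1) (R := e '' R)
    (p := e p) (q := e q) ?_ ?_ ?_ ((hi _ _).2 hp) ?_ ?_
  · exact hX'.union (isCompact_Icc.image_of_continuousOn hψ'.cont).isClosed
  · exact (e : ℝ × ℝ →L[ℝ] ℂ).lipschitz.isBounded_image hRb
  · rw [himg, ← image_union]
    exact (e.toHomeomorph.image_frontier R).symm.subset.trans (image_mono hR)
  · intro h
    exact hq ((hi _ _).1 ((e.toHomeomorph.image_closure R).symm.subset h))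
  · refine HasLogRatio.union_arc (hasLogRatio_of_isPreconnected hX'
      (hS.image e e.continuous.continuousOn) ?_ ((hi _ _).2 hpS) ((hi _ _).2 hqS)) hX' hψ'
      (fun t ht h => hXψ t ht ((hi _ _).1 h)) ?_ ?_
    · exact (disjoint_image_iff e.injective).2 hd
    · rwa [himg, hi]
    · rwa [himg, hi]

/-- Concatenation of two curves parametrised by `[0,1]`. -/
noncomputable def concat {X : Type*} (δ₁ δ₂ : ℝ → X) (t : ℝ) : X :=
  if t ≤ 1 / 2 then δ₁ (2 * t) else δ₂ (2 * t - 1)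

theorem IsArc.concat {X : Type*} [TopologicalSpace X] {δ₁ δ₂ : ℝ → X} {y u w : X}
    (h₁ : IsArc δ₁ y u) (h₂ : IsArc δ₂ u w)
    (h : ∀ s ∈ Ico (0 : ℝ) 1, ∀ t ∈ Icc (0 : ℝ) 1, δ₁ s ≠ δ₂ t) :
    IsArc (concat δ₁ δ₂) y w := by
  have hl : ∀ t ∈ Icc (0 : ℝ) 1, t ≤ 1 / 2 → 2 * t ∈ Icc (0 : ℝ) 1 := fun t ht h =>
    ⟨by linarith [ht.1], by linarith⟩
  have hr : ∀ t ∈ Icc (0 : ℝ) 1, ¬ t ≤ 1 / 2 → 2 * t - 1 ∈ Icc (0 : ℝ) 1 := fun t ht h =>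
    ⟨by linarith, by linarith [ht.2]⟩
  have key : ∀ s ∈ Icc (0 : ℝ) 1, ∀ t ∈ Icc (0 : ℝ) 1, s ≤ 1 / 2 → ¬ t ≤ 1 / 2 →
      δ₁ (2 * s) ≠ δ₂ (2 * t - 1) := by
    intro s hs t ht hs' ht' he
    rcases hs'.lt_or_eq with hlt | rfl
    · exact h _ ⟨(hl s hs hs').1, by linarith⟩ _ (hr t ht ht') he
    · rw [mul_one_div_cancel two_ne_zero, h₁.target, ← h₂.source] at he
      have := h₂.inj ⟨le_rfl, zero_le_one⟩ (hr t ht ht') he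
      exact ht' (by linarith)
  refine ⟨?_, ?_, ?_, ?_⟩
  · refine ContinuousOn.if ?_ ?_ ?_
    · rintro a ⟨-, ha⟩
      have : a = 1 / 2 := by
        have := frontier_le_subset_eq continuous_id continuous_const ha
        simpa using this
      subst this
      norm_num [h₁.target, h₂.source]
    · refine h₁.cont.comp (by fun_prop) ?_
      rintro t ⟨ht, ht'⟩
      exact hl t ht (closure_minimal (fun _ h => h) isClosed_Iic ht')
    · refine h₂.cont.comp (by fun_prop) ?_
      rintro t ⟨ht, ht'⟩
      have : 1 / 2 ≤ t := closure_minimal (t := Ici (1 / 2)) (fun _ h => (not_le.1 h).le)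
        isClosed_Ici ht'
      exact ⟨by linarith, by linarith [ht.2]⟩
  · intro s hs t ht he
    simp only [_root_.concat] at he
    split_ifs at he with h1 h2 h2
    · linarith [h₁.inj (hl s hs h1) (hl t ht h2) he]
    · exact absurd he (key s hs t ht h1 h2)
    · exact absurd he.symm (key t ht s hs h2 h1)
    · linarith [h₂.inj (hr s hs h1) (hr t ht h2) he]
  · norm_num [_root_.concat, h₁.source]
  · norm_num [_root_.concat, h₂.target]

theorem IsArc.comp_mul {X : Type*} [TopologicalSpace X] {δ : ℝ → X} {y z : X} (h : IsArc δ y z)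
    {s : ℝ} (hs : 0 < s) (hs1 : s ≤ 1) : IsArc (fun t => δ (s * t)) y (δ s) := by
  have hm : MapsTo (fun t => s * t) (Icc 0 1) (Icc 0 1) := fun t ht =>
    ⟨mul_nonneg hs.le ht.1, mul_le_one₀ hs1 ht.1 ht.2⟩
  refine ⟨h.cont.comp (by fun_prop) hm, fun t ht t' ht' he => ?_, by simp [h.source], by simp⟩
  exact mul_left_cancel₀ hs.ne' (h.inj (hm ht) (hm ht') he)

theorem IsArc.reverse {X : Type*} [TopologicalSpace X] {δ : ℝ → X} {y z : X} (h : IsArc δ y z) :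
    IsArc (fun t => δ (1 - t)) z y := by
  have hm : MapsTo (fun t : ℝ => 1 - t) (Icc 0 1) (Icc 0 1) := fun t ht =>
    ⟨by linarith [ht.2], by linarith [ht.1]⟩
  refine ⟨h.cont.comp (by fun_prop) hm, fun t ht t' ht' he => ?_, by simp [h.target],
    by simp [h.source]⟩
  linarith [h.inj (hm ht) (hm ht') he]

section NormedSpace

variable {E : Type*} [NormedAddCommGroup E] [NormedSpace ℝ E]

theorem isArc_lineMap {u w : E} (h : u ≠ w) : IsArc (AffineMap.lineMap u w : ℝ → E) u w :=
  ⟨AffineMap.lineMap_continuous.continuousOn, (AffineMap.lineMap_injective ℝ h).injOn,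
    AffineMap.lineMap_apply_zero _ _, AffineMap.lineMap_apply_one _ _⟩

/-- An arc ending in a closed convex set can be redirected, at its first entry, to any other point
of that set. -/
theorem IsArc.exists_redirect {δ : ℝ → E} {y z w : E} (h : IsArc δ y z) {C : Set E}
    (hC : IsClosed C) (hconv : Convex ℝ C) (hy : y ∉ C) (hz : z ∈ C) (hw : w ∈ C) :
    ∃ δ' : ℝ → E, ∃ u ∈ C ∩ δ '' Ioc 0 1, IsArc δ' y w ∧
      ∀ t ∈ Ioo (0 : ℝ) 1, δ' t ∈ δ '' Ioc 0 1 ∪ openSegment ℝ u w := by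
  have hne : (Icc (0 : ℝ) 1 ∩ δ ⁻¹' C).Nonempty :=
    ⟨1, ⟨zero_le_one, le_rfl⟩, by rwa [mem_preimage, h.target]⟩
  obtain ⟨s, ⟨hs, hsC⟩, hmin⟩ :=
    (isCompact_Icc.of_isClosed_subset (h.cont.preimage_isClosed_of_isClosed isClosed_Icc hC)
      inter_subset_left).exists_isLeast hne
  have hs0 : 0 < s := hs.1.lt_of_ne' (by rintro rfl; exact hy (h.source ▸ hsC))
  have h1 := h.comp_mul hs0 hs.2
  have hm : ∀ t ∈ Ioc (0 : ℝ) 1, δ (s * t) ∈ δ '' Ioc 0 1 := fun t ht =>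
    ⟨s * t, ⟨mul_pos hs0 ht.1, mul_le_one₀ hs.2 ht.1.le ht.2⟩, rfl⟩
  have hu : δ s ∈ C ∩ δ '' Ioc 0 1 := ⟨hsC, s, ⟨hs0, hs.2⟩, rfl⟩
  by_cases hsw : δ s = w
  · exact ⟨_, δ s, hu, hsw ▸ h1, fun t ht => Or.inl (hm t ⟨ht.1, ht.2.le⟩)⟩
  · refine ⟨_, δ s, hu, h1.concat (isArc_lineMap hsw) ?_, ?_⟩
    · intro t ht t' ht' he
      have hlt : s * t < s := mul_lt_of_lt_one_right hs0 ht.2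
      have hmem : δ (s * t) ∈ C := by
        rw [he]
        exact hconv.lineMap_mem hsC hw ht'
      exact hlt.not_ge (hmin ⟨⟨mul_nonneg hs0.le ht.1, hlt.le.trans hs.2⟩, hmem⟩)
    · intro t ht
      simp only [_root_.concat]
      split_ifs with hle
      · exact Or.inl (hm _ ⟨by linarith [ht.1], by linarith⟩)
      · right
        rw [openSegment_eq_image_lineMap]
        exact ⟨_, ⟨by linarith, by linarith [ht.2]⟩, rfl⟩

end NormedSpace

/-- The points of `V` which are the endpoint of an arc starting at `y` and otherwise contained
in `V`. -/
def arcReachable {X : Type*} [TopologicalSpace X] (V : Set X) (y : X) : Set X :=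
  {z | ∃ δ : ℝ → X, IsArc δ y z ∧ ∀ t ∈ Ioc (0 : ℝ) 1, δ t ∈ V}

theorem arcReachable_subset {X : Type*} [TopologicalSpace X] (V : Set X) (y : X) : arcReachable V y ⊆ V := by
  rintro z ⟨δ, hδ, h⟩
  exact hδ.target ▸ h 1 ⟨zero_lt_one, le_rfl⟩

section ConvexBody

variable {E : Type*} [NormedAddCommGroup E] [NormedSpace ℝ E]

/-- A path in a relatively open subset of a convex body can be pushed into the interior, except
for its endpoints. -/
theorem JoinedIn.push_interior {Q U : Set E} (hQ : Convex ℝ Q) (hint : (interior Q).Nonempty)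
    (hU : IsOpen U) {p q : E} (h : JoinedIn (U ∩ Q) p q) :
    JoinedIn (U ∩ interior Q ∪ {p, q}) p q := by
  obtain ⟨c, hc⟩ := hint
  obtain ⟨γ, hγ⟩ := h
  have hev : ∀ᶠ ε in 𝓝 (0 : ℝ), ∀ t ∈ (univ : Set unitInterval), γ t + ε • (c - γ t) ∈ U := by
    refine isCompact_univ.eventually_forall_of_forall_eventually fun t _ => ?_
    refine ContinuousAt.eventually_mem (f := fun z : ℝ × unitInterval => γ z.2 + z.1 • (c - γ z.2))
      (by fun_prop) (hU.mem_nhds ?_)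
    simpa using (hγ t).1
  obtain ⟨r, hr, hrU⟩ := Metric.eventually_nhds_iff.1 hev
  obtain ⟨e, he0, he⟩ := exists_between (lt_min hr one_pos)
  have hmem : ∀ ε, 0 < ε → ε ≤ e → ∀ t, γ t + ε • (c - γ t) ∈ U ∩ interior Q := by
    intro ε hε hεe t
    have hlt := hεe.trans_lt he
    refine ⟨hrU ?_ t trivial,
      hQ.add_smul_sub_mem_interior (hγ t).2 hc ⟨hε, (hlt.trans_le (min_le_right _ _)).le⟩⟩
    rw [Real.dist_eq, sub_zero, abs_of_pos hε]
    exact hlt.trans_le (min_le_left _ _)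
  have hend : ∀ t, γ t ∈ ({p, q} : Set E) →
      JoinedIn (U ∩ interior Q ∪ {p, q}) (γ t) (γ t + e • (c - γ t)) := by
    intro t ht
    apply JoinedIn.of_segment_subset
    rw [segment_eq_image']
    rintro _ ⟨θ, ⟨hθ0, hθ1⟩, rfl⟩
    rcases hθ0.eq_or_lt with rfl | hθ
    · exact Or.inr (by simpa using ht)
    · left
      simpa [smul_smul] using hmem (θ * e) (mul_pos hθ he0) (mul_le_of_le_one_left he0.le hθ1) t
  have hmid : JoinedIn (U ∩ interior Q ∪ {p, q}) (p + e • (c - p)) (q + e • (c - q)) :=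
    ⟨γ.map (f := fun z => z + e • (c - z)) (by fun_prop),
      fun t => Or.inl (hmem e he0 le_rfl t)⟩
  have hp := hend 0 (by simp)
  have hq := hend 1 (by simp)
  rw [γ.source] at hp
  rw [γ.target] at hq
  exact (hp.trans hmid).trans hq.symm

theorem arcReachable_of_closedBall {V : Set E} {y z w c : E} {r : ℝ} (hy : y ∉ V)
    (hV : Metric.closedBall c r ⊆ V) (hz : z ∈ arcReachable V y) (hzc : z ∈ Metric.closedBall c r)
    (hw : w ∈ Metric.closedBall c r) : w ∈ arcReachable V y := by
  obtain ⟨δ, hδ, h⟩ := hz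
  obtain ⟨δ', u, hu, hδ', h'⟩ := hδ.exists_redirect Metric.isClosed_closedBall
    (convex_closedBall c r) (fun hyc => hy (hV hyc)) hzc hw
  refine ⟨δ', hδ', fun t ht => ?_⟩
  rcases ht.2.eq_or_lt with rfl | ht1
  · exact hδ'.target ▸ hV hw
  · rcases h' t ⟨ht.1, ht1⟩ with ⟨s, hs, he⟩ | hseg
    · exact he ▸ h s hs
    · exact hV ((convex_closedBall c r).openSegment_subset hu.1 hw hseg)

theorem frontier_arcReachable_disjoint {V : Set E} (hV : IsOpen V) {y : E} (hy : y ∉ V) :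
    Disjoint (frontier (arcReachable V y)) V := by
  rw [disjoint_left]
  rintro w ⟨hwc, hwi⟩ hwV
  obtain ⟨r, hr, hrV⟩ := Metric.nhds_basis_closedBall.mem_iff.1 (hV.mem_nhds hwV)
  obtain ⟨z, hz, hzw⟩ := Metric.mem_closure_iff.1 hwc r hr
  refine hwi (mem_interior_iff_mem_nhds.2 ?_)
  filter_upwards [Metric.closedBall_mem_nhds w hr] with v hv
  exact arcReachable_of_closedBall hy hrV hz (by rw [Metric.mem_closedBall, dist_comm]; exact hzw.le)
    hv

/-- A boundary point of a convex body in the closure of the reachable set is the endpoint of an arc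
whose other points are interior. -/
theorem exists_arc_to_frontier {Q W : Set E} (hQc : IsClosed Q) (hQ : Convex ℝ Q) (hW : IsOpen W)
    {y w : E} (hw : w ∈ closure (arcReachable (W ∩ interior Q) y)) (hwW : w ∈ W) (hwQ : w ∈ Q)
    (hyw : y ≠ w) :
    ∃ δ : ℝ → E, IsArc δ y w ∧ ∀ t ∈ Ioo (0 : ℝ) 1, δ t ∈ W ∩ interior Q := by
  obtain ⟨r, hr, hrW⟩ := Metric.nhds_basis_closedBall.mem_iff.1
    ((hW.sdiff isClosed_singleton).mem_nhds (show w ∈ W \ {y} from ⟨hwW, hyw.symm⟩))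
  obtain ⟨z, hz, hzw⟩ := Metric.mem_closure_iff.1 hw r hr
  have hzQ := interior_subset (arcReachable_subset _ _ hz).2
  obtain ⟨δ, hδ, h⟩ := hz
  obtain ⟨δ', u, ⟨hu, s, hs, rfl⟩, hδ', h'⟩ := hδ.exists_redirect (w := w)
    (Metric.isClosed_closedBall.inter hQc) ((convex_closedBall w r).inter hQ)
    (fun hyc => (hrW hyc.1).2 rfl)
    ⟨by rw [Metric.mem_closedBall, dist_comm]; exact hzw.le, hzQ⟩
    ⟨Metric.mem_closedBall_self hr.le, hwQ⟩
  refine ⟨δ', hδ', fun t ht => ?_⟩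
  rcases h' t ht with ⟨s, hs, he⟩ | hseg
  · exact he ▸ h s hs
  · exact ⟨(hrW ((convex_closedBall w r).openSegment_subset hu.1
      (Metric.mem_closedBall_self hr.le) hseg)).1,
      hQ.openSegment_interior_self_subset_interior (h s hs).2 hwQ hseg⟩

end ConvexBody

/-- Let `ψ` be an arc from the boundary of a planar convex body `Q` to a point outside the open
set `U`. A point `y` of the interior of `Q`, outside of `U` and accessible from `U ∩ Q`, can be
joined to the boundary of `Q` by an arc in `U ∩ Q` which avoids `ψ`. The boundary point can be
taken in any given open part `Ω` of the boundary which contains the start of `ψ`. -/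
theorem exists_arc_avoiding {Q U Ω : Set (ℝ × ℝ)} (hQc : IsCompact Q) (hQ : Convex ℝ Q)
    (hU : IsOpen U) (hΩ : IsOpen Ω) (hint : interior Q ⊆ Ω) (hpc : IsPathConnected (U ∩ Q))
    {ψ α : ℝ → ℝ × ℝ} {f₀ x y y' : ℝ × ℝ} (hψ : IsArc ψ f₀ x) (hf₀ : f₀ ∈ frontier Q)
    (hψU : ∀ t ∈ Ico (0 : ℝ) 1, ψ t ∈ U ∩ Q ∩ Ω) (hxQ : x ∈ Q)
    (hα : IsArc α y y') (hαU : ∀ t ∈ Ioc (0 : ℝ) 1, α t ∈ U)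
    (hyQ : y ∈ interior Q) (hyU : y ∉ U) (hyx : y ≠ x) :
    ∃ (δ : ℝ → ℝ × ℝ) (f : ℝ × ℝ), IsArc δ y f ∧ f ∈ frontier Q ∧
      f ∈ (U ∩ Ω) \ ψ '' Icc 0 1 ∧ ∀ t ∈ Ioo (0 : ℝ) 1, δ t ∈ (U ∩ interior Q) \ ψ '' Icc 0 1 := by
  by_contra hno
  set A := ψ '' Icc 0 1 with hA
  have hAc : IsClosed A := (isCompact_Icc.image_of_continuousOn hψ.cont).isClosed
  have hAQ : A ⊆ Q := by
    rintro _ ⟨t, ht, rfl⟩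
    rcases ht.2.eq_or_lt with rfl | h1
    · rwa [hψ.target]
    · exact (hψU t ⟨ht.1, h1⟩).1.2
  have hyA : y ∉ A := by
    rintro ⟨t, ht, rfl⟩
    rcases ht.2.eq_or_lt with rfl | h1
    · exact hyx hψ.target
    · exact hyU (hψU t ⟨ht.1, h1⟩).1.1
  have hW : IsOpen (U \ A) := hU.sdiff hAc
  set V := (U \ A) ∩ interior Q with hV
  have hVo : IsOpen V := hW.inter isOpen_interior
  have hyV : y ∉ V := fun h => hyU h.1.1
  set R := arcReachable V y with hR
  have hRV : R ⊆ V := arcReachable_subset V y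
  have hRQ : closure R ⊆ Q :=
    closure_minimal (hRV.trans (inter_subset_right.trans interior_subset)) hQc.isClosed
  have hXc : IsClosed (Q \ (U ∩ Ω)) := hQc.isClosed.sdiff (hU.inter hΩ)
  have hfront : frontier R ⊆ Q \ (U ∩ Ω) ∪ A := by
    intro w hw
    by_contra hwn
    simp only [mem_union, Set.mem_sdiff, not_or, not_and, not_not] at hwn
    obtain ⟨hwX, hwA⟩ := hwn
    have hwQ := hRQ hw.1
    have hwU := hwX hwQ
    by_cases hwi : w ∈ interior Q
    · exact disjoint_left.1 (frontier_arcReachable_disjoint hVo hyV) hw ⟨⟨hwU.1, hwA⟩, hwi⟩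
    · obtain ⟨δ, hδ, h⟩ := exists_arc_to_frontier hQc.isClosed hQ hW hw.1 ⟨hwU.1, hwA⟩ hwQ
        (fun h => hwi (h ▸ hyQ))
      exact hno ⟨δ, w, hδ, ⟨subset_closure hwQ, hwi⟩, ⟨hwU, hwA⟩,
        fun t ht => ⟨⟨(h t ht).1.1, (h t ht).2⟩, (h t ht).1.2⟩⟩
  obtain ⟨p, hp⟩ : R.Nonempty := by
    have h0 : (0 : ℝ) ∈ Icc (0 : ℝ) 1 := ⟨le_rfl, zero_le_one⟩
    have hnhds : interior Q \ A ∈ 𝓝 (α 0) :=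
      (isOpen_interior.sdiff hAc).mem_nhds (by rw [hα.source]; exact ⟨hyQ, hyA⟩)
    obtain ⟨r, hr, hrs⟩ := Metric.mem_nhdsWithin_iff.1 (hα.cont 0 h0 hnhds)
    obtain ⟨s, hs0, hs⟩ := exists_between (lt_min hr one_pos)
    have hs1 := (hs.trans_le (min_le_right _ _)).le
    refine ⟨α s, _, hα.comp_mul hs0 hs1, fun t ht => ?_⟩
    have hst : 0 < s * t := mul_pos hs0 ht.1
    have hst' : s * t ≤ s := mul_le_of_le_one_right hs0.le ht.2
    have hmem := hrs ⟨?_, hst.le, hst'.trans hs1⟩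
    · exact ⟨⟨hαU _ ⟨hst, hst'.trans hs1⟩, hmem.2⟩, hmem.1⟩
    · rw [Metric.mem_ball, Real.dist_eq, sub_zero, abs_of_pos hst]
      exact hst'.trans_lt (hs.trans_le (min_le_left _ _))
  have hpV := hRV hp
  have hf₀U : f₀ ∈ U ∩ Q ∩ Ω := hψ.source ▸ hψU 0 ⟨le_rfl, zero_lt_one⟩
  obtain ⟨r, hr, hrX⟩ := Metric.isOpen_iff.1 hXc.isOpen_compl f₀ fun h => h.2 ⟨hf₀U.1.1, hf₀U.2⟩
  obtain ⟨q, hqQ, hqr⟩ : ∃ q, q ∉ Q ∧ dist f₀ q < r := by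
    rw [frontier_eq_closure_inter_closure] at hf₀
    exact Metric.mem_closure_iff.1 hf₀.2 r hr
  have hqr' : q ∈ Metric.ball f₀ r := by rwa [Metric.mem_ball, dist_comm]
  have hj₁ : JoinedIn (Q \ (U ∩ Ω))ᶜ p f₀ := by
    refine ((hpc.joinedIn p ⟨hpV.1.1, interior_subset hpV.2⟩ f₀ hf₀U.1).push_interior hQ ⟨y, hyQ⟩
      hU).mono ?_
    rintro z (hz | rfl | rfl) hzX
    · exact hzX.2 ⟨hz.1, hint hz.2⟩
    · exact hzX.2 ⟨hpV.1.1, hint hpV.2⟩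
    · exact hzX.2 ⟨hf₀U.1.1, hf₀U.2⟩
  have hj₂ : JoinedIn (Q \ (U ∩ Ω))ᶜ f₀ q :=
    JoinedIn.of_segment_subset
      (((convex_ball f₀ r).segment_subset (Metric.mem_ball_self hr) hqr').trans hrX)
  obtain ⟨γ, hγ⟩ := hj₁.trans hj₂
  refine hqQ (hRQ (mem_closure_of_arc_of_isPreconnected hXc hψ ?_ hpV.1.2 (fun h => hqQ (hAQ h))
    (isPreconnected_range γ.continuous) ?_ ⟨0, γ.source⟩ ⟨1, γ.target⟩
    (hQc.isBounded.subset (subset_closure.trans hRQ)) hfront hp))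
  · intro t ht htX
    by_contra hne
    have := hψU t ⟨ht.1, lt_of_le_of_ne ht.2 hne⟩
    exact htX.2 ⟨this.1.1, this.2⟩
  · rw [disjoint_left]
    rintro _ ⟨t, rfl⟩
    exact hγ t

theorem interior_unitSq : interior unitSq = Ioo 0 1 ×ˢ Ioo 0 1 := by
  rw [unitSq, Icc_prod_eq]
  simp only [interior_prod_eq, interior_Icc]

theorem isCompact_unitSq : IsCompact unitSq := isCompact_Icc

theorem mem_frontier_unitSq {p : ℝ × ℝ} :
    p ∈ frontier unitSq ↔ p ∈ unitSq ∧ p ∉ Ioo (0 : ℝ) 1 ×ˢ Ioo (0 : ℝ) 1 := by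
  rw [isCompact_unitSq.isClosed.frontier_eq, interior_unitSq, Set.mem_sdiff]

theorem botEdge_subset_frontier : botEdge ⊆ frontier unitSq := by
  rintro ⟨u, v⟩ ⟨⟨h0, h1⟩, rfl : v = 0⟩
  exact mem_frontier_unitSq.2 ⟨⟨⟨h0.le, le_rfl⟩, h1.le, zero_le_one⟩, fun h => h.2.1.false⟩

theorem topEdge_subset_frontier : topEdge ⊆ frontier unitSq := by
  rintro ⟨u, v⟩ ⟨⟨h0, h1⟩, rfl : v = 1⟩
  exact mem_frontier_unitSq.2 ⟨⟨⟨h0.le, zero_le_one⟩, h1.le, le_rfl⟩, fun h => h.2.2.false⟩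

theorem mem_botEdge_of_frontier {p : ℝ × ℝ} (hp : p ∈ frontier unitSq)
    (h : p ∈ Ioo (0 : ℝ) 1 ×ˢ Iio (1 : ℝ)) : p ∈ botEdge := by
  obtain ⟨hQ, hn⟩ := mem_frontier_unitSq.1 hp
  exact ⟨h.1, by_contra fun h0 => hn ⟨h.1, lt_of_le_of_ne' hQ.1.2 h0, h.2⟩⟩

theorem mem_topEdge_of_frontier {p : ℝ × ℝ} (hp : p ∈ frontier unitSq)
    (h : p ∈ Ioo (0 : ℝ) 1 ×ˢ Ioi (0 : ℝ)) : p ∈ topEdge := by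
  obtain ⟨hQ, hn⟩ := mem_frontier_unitSq.1 hp
  exact ⟨h.1, by_contra fun h0 => hn ⟨h.1, h.2, lt_of_le_of_ne hQ.2.2 h0⟩⟩

theorem isArc_projIcc {X : Type*} [TopologicalSpace X] {φ : unitInterval → X}
    (hc : Continuous φ) (hi : Function.Injective φ) :
    IsArc (fun t => φ (projIcc 0 1 zero_le_one t)) (φ 0) (φ 1) := by
  refine ⟨(hc.comp continuous_projIcc).continuousOn, fun s hs t ht h => ?_, ?_, ?_⟩
  · exact congrArg Subtype.val (by simpa only [projIcc_of_mem _ hs, projIcc_of_mem _ ht] using hi h)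
  · exact congrArg φ (projIcc_left _)
  · exact congrArg φ (projIcc_right _)

theorem Accessible.exists_isArc {X : Type*} [TopologicalSpace X] {U : Set X} {x : X}
    (h : Accessible U x) :
    ∃ (α : ℝ → X) (z : X), IsArc α x z ∧ ∀ t ∈ Ioc (0 : ℝ) 1, α t ∈ U := by
  obtain ⟨φ, hc, hi, -, hU, rfl⟩ := h
  refine ⟨_, _, (isArc_projIcc hc hi).reverse, fun t ht => hU _ ?_⟩
  have hmem : 1 - t ∈ Icc (0 : ℝ) 1 := ⟨by linarith [ht.2], by linarith [ht.1]⟩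
  simp only [projIcc_of_mem _ hmem]
  linarith [ht.1]

namespace IsCrosscut

variable {D₁ D₂ : Set (ℝ × ℝ)} {x : ℝ × ℝ} {φ : unitInterval → ℝ × ℝ}

theorem mem_union_image (φ : unitInterval → ℝ × ℝ) (t : unitInterval) :
    (t : ℝ) ≤ 1 / 2 ∧ φ t ∈ (fun s => φ (projIcc 0 1 zero_le_one (1 / 2 * s))) '' Icc 0 1 ∨
    1 / 2 ≤ (t : ℝ) ∧ φ t ∈ (fun s => φ (projIcc 0 1 zero_le_one (1 - 1 / 2 * s))) '' Icc 0 1 := by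
  rcases le_total (t : ℝ) (1 / 2) with h | h
  · refine Or.inl ⟨h, 2 * t, ⟨by linarith [t.2.1], by linarith⟩, ?_⟩
    simp only [show 1 / 2 * (2 * (t : ℝ)) = t by ring, projIcc_val]
  · refine Or.inr ⟨h, 2 * (1 - t), ⟨by linarith [t.2.2], by linarith⟩, ?_⟩
    simp only [show 1 - 1 / 2 * (2 * (1 - (t : ℝ))) = t by ring, projIcc_val]

theorem isArc_lower (h : IsCrosscut D₁ D₂ x φ) :
    IsArc (fun s => φ (projIcc 0 1 zero_le_one (1 / 2 * s))) (φ 0) x := by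
  obtain ⟨hc, hi, -, -, hx, -⟩ := h
  have := (isArc_projIcc hc hi).comp_mul (s := 1 / 2) (by norm_num) (by norm_num)
  rwa [projIcc_of_mem (x := 1 / 2) _ half.2, show φ ⟨1 / 2, half.2⟩ = x from hx] at this

theorem isArc_upper (h : IsCrosscut D₁ D₂ x φ) :
    IsArc (fun s => φ (projIcc 0 1 zero_le_one (1 - 1 / 2 * s))) (φ 1) x := by
  obtain ⟨hc, hi, -, -, hx, -⟩ := h
  have := (isArc_projIcc hc hi).reverse.comp_mul (s := 1 / 2) (by norm_num) (by norm_num)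
  have h12 : (1 : ℝ) - 1 / 2 = 1 / 2 := by norm_num
  rwa [h12, projIcc_of_mem (x := 1 / 2) _ half.2, show φ ⟨1 / 2, half.2⟩ = x from hx] at this

theorem lower_mem (h : IsCrosscut D₁ D₂ x φ) {t : ℝ} (ht : t ∈ Ico (0 : ℝ) 1) :
    φ (projIcc 0 1 zero_le_one (1 / 2 * t)) ∈ D₁ ∩ Ioo (0 : ℝ) 1 ×ˢ Iio (1 : ℝ) := by
  obtain ⟨-, -, hb, -, -, hint, hl, -⟩ := h
  have hmem : 1 / 2 * t ∈ Icc (0 : ℝ) 1 := ⟨by linarith [ht.1], by linarith [ht.2]⟩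
  rw [projIcc_of_mem _ hmem]
  refine ⟨hl _ (by linarith [ht.2]), ?_⟩
  rcases ht.1.eq_or_lt with rfl | h0
  · have : (⟨1 / 2 * 0, hmem⟩ : unitInterval) = 0 := Subtype.ext (mul_zero _)
    rw [this]
    exact ⟨hb.1, by simp [hb.2]⟩
  · have := hint ⟨1 / 2 * t, hmem⟩ (by linarith) (by linarith [ht.2])
    rw [interior_unitSq] at this
    exact ⟨this.1, this.2.2⟩

theorem upper_mem (h : IsCrosscut D₁ D₂ x φ) {t : ℝ} (ht : t ∈ Ico (0 : ℝ) 1) :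
    φ (projIcc 0 1 zero_le_one (1 - 1 / 2 * t)) ∈ D₂ ∩ Ioo (0 : ℝ) 1 ×ˢ Ioi (0 : ℝ) := by
  obtain ⟨-, -, -, hb, -, hint, -, hl⟩ := h
  have hmem : 1 - 1 / 2 * t ∈ Icc (0 : ℝ) 1 := ⟨by linarith [ht.2], by linarith [ht.1]⟩
  rw [projIcc_of_mem _ hmem]
  refine ⟨hl _ (by linarith [ht.2]), ?_⟩
  rcases ht.1.eq_or_lt with rfl | h0
  · have : (⟨1 - 1 / 2 * 0, hmem⟩ : unitInterval) = 1 := Subtype.ext (by simp)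
    rw [this]
    exact ⟨hb.1, by simp [hb.2]⟩
  · have := hint ⟨1 - 1 / 2 * t, hmem⟩ (by linarith [ht.2]) (by linarith)
    rw [interior_unitSq] at this
    exact ⟨this.1, this.2.1⟩

end IsCrosscut

/-- Two arcs starting at `y`, in `D₁` and `D₂`, form a crosscut through `y`. -/
theorem exists_isCrosscut_of_arcs {D₁ D₂ : Set (ℝ × ℝ)} {y f₁ f₂ : ℝ × ℝ} (hd : Disjoint D₁ D₂)
    (hy : y ∈ interior unitSq) (hy₁ : y ∉ D₁)
    {δ₁ δ₂ : ℝ → ℝ × ℝ} (hδ₁ : IsArc δ₁ y f₁) (hδ₂ : IsArc δ₂ y f₂)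
    (hf₁ : f₁ ∈ botEdge ∩ D₁) (hf₂ : f₂ ∈ topEdge ∩ D₂)
    (h₁ : ∀ t ∈ Ioo (0 : ℝ) 1, δ₁ t ∈ D₁ ∩ interior unitSq)
    (h₂ : ∀ t ∈ Ioo (0 : ℝ) 1, δ₂ t ∈ D₂ ∩ interior unitSq) :
    ∃ φ : unitInterval → ℝ × ℝ, IsCrosscut D₁ D₂ y φ ∧
      range φ ⊆ {y} ∪ (δ₁ '' Ioc 0 1 ∪ δ₂ '' Ioc 0 1) := by
  have hD₁ : ∀ t ∈ Ioc (0 : ℝ) 1, δ₁ t ∈ D₁ := fun t ht =>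
    ht.2.eq_or_lt.elim (fun h => h ▸ hδ₁.target ▸ hf₁.2) (fun h => (h₁ t ⟨ht.1, h⟩).1)
  have hD₂ : ∀ t ∈ Ioc (0 : ℝ) 1, δ₂ t ∈ D₂ := fun t ht =>
    ht.2.eq_or_lt.elim (fun h => h ▸ hδ₂.target ▸ hf₂.2) (fun h => (h₂ t ⟨ht.1, h⟩).1)
  have harc := hδ₁.reverse.concat hδ₂ fun s hs t ht he => by
    have hs' : δ₁ (1 - s) ∈ D₁ := hD₁ _ ⟨by linarith [hs.2], by linarith [hs.1]⟩
    rw [he] at hs'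
    rcases ht.1.eq_or_lt with rfl | h0
    · exact hy₁ (hδ₂.source ▸ hs')
    · exact disjoint_left.1 hd hs' (hD₂ t ⟨h0, ht.2⟩)
  have hlow : ∀ t : ℝ, t ≤ 1 / 2 → concat (fun t => δ₁ (1 - t)) δ₂ t = δ₁ (1 - 2 * t) :=
    fun t ht => if_pos ht
  have hupp : ∀ t : ℝ, 1 / 2 < t → concat (fun t => δ₁ (1 - t)) δ₂ t = δ₂ (2 * t - 1) :=
    fun t ht => if_neg ht.not_ge
  have hhalf : concat (fun t => δ₁ (1 - t)) δ₂ (1 / 2) = y := by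
    rw [hlow _ le_rfl, mul_one_div_cancel two_ne_zero, sub_self, hδ₁.source]
  refine ⟨fun t => concat (fun t => δ₁ (1 - t)) δ₂ t, ⟨?_, ?_, ?_, ?_, hhalf, ?_, ?_, ?_⟩, ?_⟩
  · exact harc.cont.comp_continuous continuous_subtype_val Subtype.prop
  · exact fun s t h => Subtype.ext (harc.inj s.2 t.2 h)
  · exact mem_of_eq_of_mem harc.source hf₁.1
  · exact mem_of_eq_of_mem harc.target hf₂.1
  · intro t h0 h1
    rcases lt_trichotomy (t : ℝ) (1 / 2) with h | h | h
    · simp only [hlow _ h.le]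
      exact (h₁ _ ⟨by linarith, by linarith⟩).2
    · simp only [h, hhalf, hy]
    · simp only [hupp _ h]
      exact (h₂ _ ⟨by linarith, by linarith⟩).2
  · intro t h
    simp only [hlow _ h.le]
    exact hD₁ _ ⟨by linarith, by linarith [t.2.1]⟩
  · intro t h
    simp only [hupp _ h]
    exact hD₂ _ ⟨by linarith, by linarith [t.2.2]⟩
  · rintro _ ⟨t, rfl⟩
    rcases lt_trichotomy (t : ℝ) (1 / 2) with h | h | h
    · simp only [hlow _ h.le]
      exact Or.inr (Or.inl ⟨_, ⟨by linarith, by linarith [t.2.1]⟩, rfl⟩)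
    · simp only [h, hhalf]
      exact Or.inl rfl
    · simp only [hupp _ h]
      exact Or.inr (Or.inr ⟨_, ⟨by linarith, by linarith [t.2.2]⟩, rfl⟩)

/-- Given a crosscut through `x`, one can find a crosscut through any other point `y` of
`K \ {a,b}` which is disjoint from it. -/
theorem exists_disjoint_crosscut (D₁ D₂ K : Set (ℝ × ℝ)) (a b : ℝ × ℝ)
    (hdec : SqDecomp D₁ D₂ K a b) (x y : ℝ × ℝ)
    (hx : x ∈ K) (hxa : x ≠ a) (hxb : x ≠ b)
    (hy : y ∈ K) (hya : y ≠ a) (hyb : y ≠ b) (hxy : x ≠ y)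
    (φx : unitInterval → ℝ × ℝ) (hφx : IsCrosscut D₁ D₂ x φx) :
    ∃ φy : unitInterval → ℝ × ℝ, IsCrosscut D₁ D₂ y φy ∧
      Set.range φx ∩ Set.range φy = ∅ := by
  obtain ⟨U₁, hU₁, hD₁⟩ := hdec.open₁
  obtain ⟨U₂, hU₂, hD₂⟩ := hdec.open₂
  have hKQ : ∀ z ∈ K, z ∈ unitSq := fun z hz => hdec.cover ▸ Or.inr hz
  have hK₁ : ∀ z ∈ K, z ∉ D₁ := fun z hz => (hdec.front₁ ▸ hz : z ∈ closure D₁ \ D₁).2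
  have hK₂ : ∀ z ∈ K, z ∉ D₂ := fun z hz => (hdec.front₂ ▸ hz : z ∈ closure D₂ \ D₂).2
  have hyi : y ∈ interior unitSq := by
    by_contra hn
    have : y ∈ ({a, b} : Set (ℝ × ℝ)) :=
      hdec.bdry ▸ ⟨hy, subset_closure (hKQ y hy), hn⟩
    exact this.elim hya hyb
  have hyU₁ : y ∉ U₁ := fun h => hK₁ y hy (hD₁ ▸ ⟨h, hKQ y hy⟩)
  have hyU₂ : y ∉ U₂ := fun h => hK₂ y hy (hD₂ ▸ ⟨h, hKQ y hy⟩)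
  have hconv : Convex ℝ unitSq := convex_Icc _ _
  obtain ⟨α₁, z₁, hα₁, hαD₁⟩ := (hdec.acc₁ y hy).exists_isArc
  obtain ⟨α₂, z₂, hα₂, hαD₂⟩ := (hdec.acc₂ y hy).exists_isArc
  obtain ⟨δ₁, f₁, hδ₁, hf₁, hf₁U, hδU₁⟩ := exists_arc_avoiding isCompact_unitSq hconv hU₁
    (isOpen_Ioo.prod isOpen_Iio)
    (interior_unitSq.subset.trans (prod_mono subset_rfl Ioo_subset_Iio_self))
    (hD₁ ▸ hdec.pconn₁) hφx.isArc_lower (botEdge_subset_frontier hφx.2.2.1)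
    (fun t ht => hD₁ ▸ hφx.lower_mem ht) (hKQ x hx) hα₁
    (fun t ht => (hD₁ ▸ hαD₁ t ht : α₁ t ∈ U₁ ∩ unitSq).1) hyi hyU₁ hxy.symm
  obtain ⟨δ₂, f₂, hδ₂, hf₂, hf₂U, hδU₂⟩ := exists_arc_avoiding isCompact_unitSq hconv hU₂
    (isOpen_Ioo.prod isOpen_Ioi)
    (interior_unitSq.subset.trans (prod_mono subset_rfl Ioo_subset_Ioi_self))
    (hD₂ ▸ hdec.pconn₂) hφx.isArc_upper (topEdge_subset_frontier hφx.2.2.2.1)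
    (fun t ht => hD₂ ▸ hφx.upper_mem ht) (hKQ x hx) hα₂
    (fun t ht => (hD₂ ▸ hαD₂ t ht : α₂ t ∈ U₂ ∩ unitSq).1) hyi hyU₂ hxy.symm
  have hQ : frontier unitSq ⊆ unitSq := isCompact_unitSq.isClosed.frontier_subset
  have hf₁D : f₁ ∈ D₁ := hD₁ ▸ ⟨hf₁U.1.1, hQ hf₁⟩
  have hf₂D : f₂ ∈ D₂ := hD₂ ▸ ⟨hf₂U.1.1, hQ hf₂⟩
  have hδD₁ : ∀ t ∈ Ioo (0 : ℝ) 1, δ₁ t ∈ D₁ := fun t ht =>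
    hD₁ ▸ ⟨(hδU₁ t ht).1.1, interior_subset (hδU₁ t ht).1.2⟩
  have hδD₂ : ∀ t ∈ Ioo (0 : ℝ) 1, δ₂ t ∈ D₂ := fun t ht =>
    hD₂ ▸ ⟨(hδU₂ t ht).1.1, interior_subset (hδU₂ t ht).1.2⟩
  obtain ⟨φy, hφy, hrange⟩ := exists_isCrosscut_of_arcs hdec.disj hyi (hK₁ y hy)
    hδ₁ hδ₂ ⟨mem_botEdge_of_frontier hf₁ hf₁U.1.2, hf₁D⟩
    ⟨mem_topEdge_of_frontier hf₂ hf₂U.1.2, hf₂D⟩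
    (fun t ht => ⟨hδD₁ t ht, (hδU₁ t ht).1.2⟩) (fun t ht => ⟨hδD₂ t ht, (hδU₂ t ht).1.2⟩)
  refine ⟨φy, hφy, eq_empty_iff_forall_notMem.2 ?_⟩
  rintro _ ⟨⟨t, rfl⟩, hty⟩
  obtain ⟨-, -, -, -, hxhalf, -, hlow, hupp⟩ := hφx
  have hK : φx t ∈ K → φx t = x := fun h => by
    rcases lt_trichotomy (t : ℝ) (1 / 2) with ht | ht | ht
    · exact absurd (hlow t ht) (hK₁ _ h)
    · exact (congrArg φx (Subtype.ext ht : t = half)).trans hxhalf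
    · exact absurd (hupp t ht) (hK₂ _ h)
  have hlow' : (t : ℝ) ≤ 1 / 2 → φx t ∉ D₂ := fun ht h => by
    rcases ht.eq_or_lt with he | hlt
    · obtain rfl : t = half := Subtype.ext he
      exact hK₂ x hx (hxhalf ▸ h)
    · exact disjoint_left.1 hdec.disj (hlow t hlt) h
  have hupp' : 1 / 2 ≤ (t : ℝ) → φx t ∉ D₁ := fun ht h => by
    rcases ht.eq_or_lt with he | hlt
    · obtain rfl : t = half := Subtype.ext he.symm
      exact hK₁ x hx (hxhalf ▸ h)
    · exact disjoint_left.1 hdec.disj h (hupp t hlt)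
  rcases hrange hty with he | ⟨s, hs, he⟩ | ⟨s, hs, he⟩
  · rw [mem_singleton_iff] at he
    exact hxy ((hK (he ▸ hy)).symm.trans he)
  · rcases IsCrosscut.mem_union_image φx t with ⟨-, h⟩ | ⟨ht, -⟩
    · rw [← he] at h
      rcases hs.2.eq_or_lt with rfl | h1
      · exact hf₁U.2 (hδ₁.target ▸ h)
      · exact (hδU₁ s ⟨hs.1, h1⟩).2 h
    · refine hupp' ht ?_
      rw [← he]
      rcases hs.2.eq_or_lt with rfl | h1
      · exact hδ₁.target ▸ hf₁D
      · exact hδD₁ s ⟨hs.1, h1⟩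
  · rcases IsCrosscut.mem_union_image φx t with ⟨ht, -⟩ | ⟨-, h⟩
    · refine hlow' ht ?_
      rw [← he]
      rcases hs.2.eq_or_lt with rfl | h1
      · exact hδ₂.target ▸ hf₂D
      · exact hδD₂ s ⟨hs.1, h1⟩
    · rw [← he] at h
      rcases hs.2.eq_or_lt with rfl | h1
      · exact hf₂U.2 (hδ₂.target ▸ h)
      · exact (hδU₂ s ⟨hs.1, h1⟩).2 h
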